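/- Let AN be a well-formed acyclic net. Then: (1) f(AN) = ⋃ f(scenarios(AN)) for f = sseq, mixsseq, reach, fseq (step sequences, mixed step sequences, reachable markings, firing sequences); and (2) f(AN) = ⋃ f(maxscenarios(AN)) for f = maxsseq, maxmixsseq, finreach (maximal step sequences, maximal mixed step sequences, final reachable markings). -/

import Mathlib

/-- A net: a triple of places, transitions, and a flow relation. -/
structure Net (α : Type*) where
  places : Set α
  transitions : Set α
  flow : α → α → Prop

namespace Net

variable {α : Type*}

/-- The set of direct predecessors (preset) of a node. -/
def pre (N : Net α) (x : α) : Set α := {z | N.flow z x}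

/-- The set of direct successors (postset) of a node. -/
def post (N : Net α) (x : α) : Set α := {z | N.flow x z}

/-- Preset of a set of nodes. -/
def preSet (N : Net α) (X : Set α) : Set α := ⋃ x ∈ X, N.pre x

/-- Postset of a set of nodes. -/
def postSet (N : Net α) (X : Set α) : Set α := ⋃ x ∈ X, N.post x

/-- Initial places: places with empty preset. -/
def initPlaces (N : Net α) : Set α := {p ∈ N.places | N.pre p = ∅}

/-- Final places: places with empty postset. -/
def finPlaces (N : Net α) : Set α := {p ∈ N.places | N.post p = ∅}

/-- An acyclic net: places and transitions are disjoint finite sets, places nonempty,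
the flow relation relates only places to transitions and vice versa, is acyclic, and
every transition has at least one pre-place and one post-place. -/
def IsAcyclicNet (N : Net α) : Prop :=
  N.places.Finite ∧ N.transitions.Finite ∧
  Disjoint N.places N.transitions ∧
  (∀ x y, N.flow x y →
    (x ∈ N.places ∧ y ∈ N.transitions) ∨ (x ∈ N.transitions ∧ y ∈ N.places)) ∧
  N.places.Nonempty ∧
  (∀ x, ¬ Relation.TransGen N.flow x x) ∧
  (∀ t ∈ N.transitions, (N.pre t).Nonempty ∧ (N.post t).Nonempty)

/-- An occurrence net: an acyclic net with `|pre p| ≤ 1` and `|post p| ≤ 1` for each place. -/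
def IsOccurrenceNet (N : Net α) : Prop :=
  IsAcyclicNet N ∧ ∀ p ∈ N.places, (N.pre p).Subsingleton ∧ (N.post p).Subsingleton

/-- A backward deterministic acyclic net: an acyclic net with `|pre p| ≤ 1` for each place. -/
def IsBDAN (N : Net α) : Prop :=
  IsAcyclicNet N ∧ ∀ p ∈ N.places, (N.pre p).Subsingleton

/-- `N` is a subnet of `M`: nonempty set of places included, transitions included,
flow is the restriction of that of `M`, and every transition of `N` retains its
full preset and postset from `M`. -/
def IsSubnet (N M : Net α) : Prop :=
  N.places.Nonempty ∧ N.places ⊆ M.places ∧ N.transitions ⊆ M.transitions ∧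
  (∀ x y, N.flow x y ↔ M.flow x y ∧
    ((x ∈ N.places ∧ y ∈ N.transitions) ∨ (x ∈ N.transitions ∧ y ∈ N.places))) ∧
  (∀ t ∈ N.transitions, N.pre t = M.pre t ∧ N.post t = M.post t)

/-- `N` is a co-initial subnet of `M` : a subnet with the same initial places. -/
def CoInitial (N M : Net α) : Prop := IsSubnet N M ∧ N.initPlaces = M.initPlaces

/-- A step: a nonempty set of transitions with pairwise disjoint presets. -/
def IsStep (N : Net α) (U : Set α) : Prop :=
  U.Nonempty ∧ U ⊆ N.transitions ∧ ∀ t ∈ U, ∀ u ∈ U, t ≠ u → N.pre t ∩ N.pre u = ∅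

/-- A step `U` is enabled at marking `M` if all its pre-places are in `M`. -/
def Enabled (N : Net α) (M U : Set α) : Prop := IsStep N U ∧ N.preSet U ⊆ M

/-- Executing an enabled step `U` at `M` yields `M' = (M ∪ post U) \ pre U`. -/
def StepTrans (N : Net α) (M U M' : Set α) : Prop :=
  Enabled N M U ∧ M' = (M ∪ N.postSet U) \ N.preSet U

/-- Step sequences from a marking to a marking. -/
inductive StepSeqFrom (N : Net α) : Set α → List (Set α) → Set α → Prop
  | nil (M : Set α) : StepSeqFrom N M [] M
  | cons {M U M' σ M''} : StepTrans N M U M' → StepSeqFrom N M' σ M'' →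
      StepSeqFrom N M (U :: σ) M''

/-- The initial marking: the set of initial places. -/
def initMarking (N : Net α) : Set α := N.initPlaces

/-- Step sequences executable from the initial marking. -/
def sseq (N : Net α) : Set (List (Set α)) := {σ | ∃ M, StepSeqFrom N N.initMarking σ M}

/-- Mixed step sequences: alternating steps and resulting markings from a marking. -/
inductive MixFrom (N : Net α) : Set α → List (Set α × Set α) → Prop
  | nil (M : Set α) : MixFrom N M []
  | cons {M U M' l} : StepTrans N M U M' → MixFrom N M' l → MixFrom N M ((U, M') :: l)

/-- Mixed step sequences from the initial marking, represented as the initial marking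
paired with the list of consecutive (step, marking) pairs. -/
def mixsseq (N : Net α) : Set (Set α × List (Set α × Set α)) :=
  {p | p.1 = N.initMarking ∧ MixFrom N p.1 p.2}

/-- Markings reachable from the initial marking. -/
def reach (N : Net α) : Set (Set α) := {M | ∃ σ, StepSeqFrom N N.initMarking σ M}

/-- Firing sequences: step sequences all of whose steps are singletons. -/
def fseq (N : Net α) : Set (List (Set α)) :=
  {σ | σ ∈ N.sseq ∧ ∀ U ∈ σ, ∃ t, U = {t}}

/-- Maximal step sequences: no step can be appended. -/
def maxsseq (N : Net α) : Set (List (Set α)) :=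
  {σ | σ ∈ N.sseq ∧ ¬ ∃ U, σ ++ [U] ∈ N.sseq}

/-- Maximal mixed step sequences: no step and marking can be appended. -/
def maxmixsseq (N : Net α) : Set (Set α × List (Set α × Set α)) :=
  {p | p ∈ N.mixsseq ∧ ¬ ∃ U M, (p.1, p.2 ++ [(U, M)]) ∈ N.mixsseq}

/-- Final reachable markings: markings reached by maximal step sequences. -/
def finreach (N : Net α) : Set (Set α) :=
  {M | ∃ σ ∈ N.maxsseq, StepSeqFrom N N.initMarking σ M}

/-- A step sequence is well-formed if post-sets of distinct transitions in the same
step are disjoint, and post-sets of distinct steps are disjoint. -/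
def WellFormedSeq (N : Net α) (σ : List (Set α)) : Prop :=
  (∀ U ∈ σ, ∀ t ∈ U, ∀ u ∈ U, t ≠ u → N.post t ∩ N.post u = ∅) ∧
  σ.Pairwise (fun U V => N.postSet U ∩ N.postSet V = ∅)

/-- The set of transitions occurring in a step sequence. -/
def transOf (σ : List (Set α)) : Set α := {t | ∃ U ∈ σ, t ∈ U}

/-- A net is well-formed if each transition occurs in at least one step sequence and
all step sequences are well-formed. -/
def WellFormedNet (N : Net α) : Prop :=
  (∀ t ∈ N.transitions, ∃ σ ∈ N.sseq, t ∈ transOf σ) ∧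
  (∀ σ ∈ N.sseq, N.WellFormedSeq σ)

/-- Scenarios of a net: occurrence nets that are co-initial subnets of it. -/
def scenarios (N : Net α) : Set (Net α) :=
  {S | IsOccurrenceNet S ∧ CoInitial S N}

/-- Maximal scenarios: scenarios not strictly included (co-initially) in another scenario. -/
def maxscenarios (N : Net α) : Set (Net α) :=
  {S | S ∈ N.scenarios ∧ ¬ ∃ S', S' ∈ N.scenarios ∧ S' ≠ S ∧ CoInitial S S'}

/-- The scenario induced by a (well-formed) step sequence `σ`:
transitions are those occurring in `σ`, places are the initial places together with
the postsets of those transitions, and the flow is the restriction. -/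
def inducedScenario (N : Net α) (σ : List (Set α)) : Net α where
  places := N.initMarking ∪ N.postSet (transOf σ)
  transitions := transOf σ
  flow := fun x y => N.flow x y ∧
    ((x ∈ N.initMarking ∪ N.postSet (transOf σ) ∧ y ∈ transOf σ) ∨
     (x ∈ transOf σ ∧ y ∈ N.initMarking ∪ N.postSet (transOf σ)))

end Net
namespace Net

variable {α : Type*}

theorem mem_preSet {N : Net α} {X : Set α} {p : α} :
    p ∈ N.preSet X ↔ ∃ t ∈ X, N.flow p t := by
  simp [preSet, pre]

theorem mem_postSet {N : Net α} {X : Set α} {p : α} :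
    p ∈ N.postSet X ↔ ∃ t ∈ X, N.flow t p := by
  simp [postSet, post]

theorem transOf_snoc (σ : List (Set α)) (U : Set α) :
    transOf (σ ++ [U]) = transOf σ ∪ U := by
  ext t
  simp only [transOf, List.mem_append, List.mem_singleton, Set.mem_ofPred_eq, Set.mem_union]
  constructor
  · rintro ⟨V, hV | rfl, ht⟩
    · exact Or.inl ⟨V, hV, ht⟩
    · exact Or.inr ht
  · rintro (⟨V, hV, ht⟩ | ht)
    · exact ⟨V, Or.inl hV, ht⟩
    · exact ⟨U, Or.inr rfl, ht⟩

theorem stepSeq_snoc {N : Net α} {σ : List (Set α)} {U M M'' : Set α} :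
    StepSeqFrom N M (σ ++ [U]) M'' ↔ ∃ M', StepSeqFrom N M σ M' ∧ StepTrans N M' U M'' := by
  induction σ generalizing M with
  | nil =>
    constructor
    · intro h
      cases h with
      | cons h1 h2 => cases h2; exact ⟨M, .nil _, h1⟩
    · rintro ⟨M', h1, h2⟩
      cases h1
      exact .cons h2 (.nil _)
  | cons V σ ih =>
    constructor
    · intro h
      cases h with
      | cons h1 h2 =>
        obtain ⟨M', h3, h4⟩ := ih.1 h2
        exact ⟨M', .cons h1 h3, h4⟩
    · rintro ⟨M', h1, h2⟩
      cases h1 with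
      | cons h3 h4 => exact .cons h3 (ih.2 ⟨M', h4, h2⟩)

theorem stepTrans_det {N : Net α} {M U A B : Set α} (h1 : StepTrans N M U A)
    (h2 : StepTrans N M U B) : A = B := h1.2.trans h2.2.symm

theorem stepSeq_det {N : Net α} {M : Set α} {σ : List (Set α)} {A B : Set α}
    (h1 : StepSeqFrom N M σ A) (h2 : StepSeqFrom N M σ B) : A = B := by
  induction h1 with
  | nil => cases h2; rfl
  | cons h3 _ ih =>
    cases h2 with
    | cons h5 h6 =>
      cases stepTrans_det h3 h5
      exact ih h6

theorem mix_stepSeq {N : Net α} {M : Set α} {l : List (Set α × Set α)} (h : MixFrom N M l) :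
    ∃ M', StepSeqFrom N M (l.map Prod.fst) M' := by
  induction h with
  | nil M => exact ⟨M, .nil _⟩
  | cons h1 _ ih => obtain ⟨M', h'⟩ := ih; exact ⟨M', .cons h1 h'⟩

theorem mix_append {N : Net α} {M U M'' : Set α} {l : List (Set α × Set α)} (h : MixFrom N M l)
    (hs : StepSeqFrom N M (l.map Prod.fst ++ [U]) M'') : MixFrom N M (l ++ [(U, M'')]) := by
  induction h with
  | nil M => cases hs with
    | cons h1 h2 => cases h2; exact .cons h1 (.nil _)
  | cons h1 _ ih =>
    cases hs with
    | cons h3 h4 =>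
      cases stepTrans_det h1 h3
      exact .cons h1 (ih h4)

theorem maxmix_iff {N : Net α} {p : Set α × List (Set α × Set α)} :
    p ∈ N.maxmixsseq ↔ p ∈ N.mixsseq ∧ p.2.map Prod.fst ∈ N.maxsseq := by
  obtain ⟨M, l⟩ := p
  constructor
  · rintro ⟨⟨h1, h2⟩, h3⟩
    dsimp only at h1 h2 h3 ⊢
    subst h1
    refine ⟨⟨rfl, h2⟩, mix_stepSeq h2, ?_⟩
    rintro ⟨U, M', hU⟩
    exact h3 ⟨U, M', rfl, mix_append h2 hU⟩
  · rintro ⟨⟨h1, h2⟩, h3⟩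
    dsimp only at h1 h2 h3 ⊢
    subst h1
    refine ⟨⟨rfl, h2⟩, ?_⟩
    rintro ⟨U, M', _, hU⟩
    apply h3.2
    have := mix_stepSeq hU
    simp only [List.map_append, List.map_cons, List.map_nil] at this
    exact ⟨U, this⟩

theorem subnet_preSet {S N : Net α} (h : IsSubnet S N) {U : Set α} (hU : U ⊆ S.transitions) :
    S.preSet U = N.preSet U :=
  Set.iUnion₂_congr fun t ht => (h.2.2.2.2 t (hU ht)).1

theorem subnet_postSet {S N : Net α} (h : IsSubnet S N) {U : Set α} (hU : U ⊆ S.transitions) :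
    S.postSet U = N.postSet U :=
  Set.iUnion₂_congr fun t ht => (h.2.2.2.2 t (hU ht)).2

theorem subnet_stepTrans {S N : Net α} (h : IsSubnet S N) {M U M' : Set α}
    (hU : U ⊆ S.transitions) : StepTrans S M U M' ↔ StepTrans N M U M' := by
  have e : IsStep S U ↔ IsStep N U := by
    constructor
    · rintro ⟨h1, -, h3⟩
      refine ⟨h1, hU.trans h.2.2.1, fun t ht u hu hne => ?_⟩
      rw [← (h.2.2.2.2 t (hU ht)).1, ← (h.2.2.2.2 u (hU hu)).1]
      exact h3 t ht u hu hne
    · rintro ⟨h1, -, h3⟩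
      refine ⟨h1, hU, fun t ht u hu hne => ?_⟩
      rw [(h.2.2.2.2 t (hU ht)).1, (h.2.2.2.2 u (hU hu)).1]
      exact h3 t ht u hu hne
  unfold StepTrans Enabled
  rw [e, subnet_preSet h hU, subnet_postSet h hU]

theorem subnet_seq_up {S N : Net α} (h : IsSubnet S N) {M M' : Set α} {σ : List (Set α)}
    (hs : StepSeqFrom S M σ M') : StepSeqFrom N M σ M' := by
  induction hs with
  | nil => exact .nil _
  | cons h1 _ ih => exact .cons ((subnet_stepTrans h h1.1.1.2.1).1 h1) ih

theorem subnet_mix_up {S N : Net α} (h : IsSubnet S N) {M : Set α} {l : List (Set α × Set α)}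
    (hs : MixFrom S M l) : MixFrom N M l := by
  induction hs with
  | nil => exact .nil _
  | cons h1 _ ih => exact .cons ((subnet_stepTrans h h1.1.1.2.1).1 h1) ih

theorem subnet_seq_down {S N : Net α} (h : IsSubnet S N) {M M' : Set α} {σ : List (Set α)}
    (hs : StepSeqFrom N M σ M') (hσ : transOf σ ⊆ S.transitions) : StepSeqFrom S M σ M' := by
  induction hs with
  | nil => exact .nil _
  | cons h1 _ ih =>
    refine .cons ((subnet_stepTrans h fun t ht => hσ ⟨_, List.mem_cons_self, ht⟩).2 h1)
      (ih ?_)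
    rintro t ⟨V, hV, ht⟩
    exact hσ ⟨V, List.mem_cons_of_mem _ hV, ht⟩

theorem subnet_mix_down {S N : Net α} (h : IsSubnet S N) {M : Set α}
    {l : List (Set α × Set α)} (hs : MixFrom N M l)
    (hσ : transOf (l.map Prod.fst) ⊆ S.transitions) : MixFrom S M l := by
  induction hs with
  | nil => exact .nil _
  | cons h1 _ ih =>
    refine .cons ((subnet_stepTrans h fun t ht => hσ ⟨_, List.mem_cons_self, ht⟩).2 h1)
      (ih ?_)
    rintro t ⟨V, hV, ht⟩
    exact hσ ⟨V, List.mem_cons_of_mem _ hV, ht⟩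

theorem seq_trans {N : Net α} {M M' : Set α} {σ : List (Set α)}
    (hs : StepSeqFrom N M σ M') : transOf σ ⊆ N.transitions := by
  induction hs with
  | nil => rintro t ⟨V, hV, _⟩; cases hV
  | cons h1 _ ih =>
    rintro t ⟨V, hV, ht⟩
    rcases List.mem_cons.1 hV with rfl | hV
    · exact h1.1.1.2.1 ht
    · exact ih ⟨V, hV, ht⟩

/-- Structural invariant of executions in a well-formed net. -/
theorem seq_invariant {N : Net α} (hwf : N.WellFormedNet) {σ : List (Set α)} {M : Set α}
    (hs : StepSeqFrom N N.initMarking σ M) :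
    M = (N.initMarking ∪ N.postSet (transOf σ)) \ N.preSet (transOf σ) ∧
    N.preSet (transOf σ) ⊆ N.initMarking ∪ N.postSet (transOf σ) ∧
    (∀ t ∈ transOf σ, ∀ u ∈ transOf σ, ∀ p, N.flow p t → N.flow p u → t = u) ∧
    (∀ t ∈ transOf σ, ∀ u ∈ transOf σ, ∀ p, N.flow t p → N.flow u p → t = u) := by
  induction σ using List.reverseRecOn generalizing M with
  | nil =>
    cases hs
    simp [transOf, preSet, postSet]
  | append_singleton σ U ih =>
    have hwfs := hwf.2 _ ⟨M, hs⟩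
    obtain ⟨M', hs', hU⟩ := stepSeq_snoc.1 hs
    obtain ⟨h1, h2, h3, h4⟩ := ih hs'
    obtain ⟨⟨⟨_, hUT, hUd⟩, hUM⟩, hM⟩ := hU
    have hpair : ∀ t ∈ transOf σ, ∀ u ∈ U, ∀ p, N.flow t p → ¬ N.flow u p := by
      rintro t ⟨V, hV, ht⟩ u hu p htp hup
      have := (List.pairwise_append.1 hwfs.2).2.2 V hV U (by simp)
      have hp : p ∈ N.postSet V ∩ N.postSet U :=
        ⟨mem_postSet.2 ⟨t, ht, htp⟩, mem_postSet.2 ⟨u, hu, hup⟩⟩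
      rw [this] at hp
      exact hp
    have hinit : ∀ p ∈ N.initMarking, ∀ u, ¬ N.flow u p := by
      rintro p ⟨_, hp⟩ u hu
      have : u ∈ N.pre p := hu
      rw [hp] at this
      exact this
    have hUM' : ∀ u ∈ U, ∀ p, N.flow p u →
        p ∈ (N.initMarking ∪ N.postSet (transOf σ)) \ N.preSet (transOf σ) := by
      intro u hu p hp
      rw [← h1]
      exact hUM (mem_preSet.2 ⟨u, hu, hp⟩)
    have hpre : N.preSet (transOf σ ∪ U) = N.preSet (transOf σ) ∪ N.preSet U := by
      ext p; simp only [mem_preSet, Set.mem_union]; grind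
    have hpost : N.postSet (transOf σ ∪ U) = N.postSet (transOf σ) ∪ N.postSet U := by
      ext p; simp only [mem_postSet, Set.mem_union]; grind
    have hdisj : ∀ p ∈ N.postSet U, p ∉ N.preSet (transOf σ) := by
      intro p hp hp'
      obtain ⟨u, hu, hup⟩ := mem_postSet.1 hp
      rcases h2 hp' with hi | hq
      · exact hinit p hi u hup
      · obtain ⟨t, ht, htp⟩ := mem_postSet.1 hq
        exact hpair t ht u hu p htp hup
    rw [transOf_snoc, hpre, hpost]
    refine ⟨?_, ?_, ?_, ?_⟩
    · rw [hM, h1]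
      ext p
      have := hdisj p
      simp only [Set.mem_sdiff, Set.mem_union]
      tauto
    · rintro p (hp | hp)
      · rcases h2 hp with h | h
        · exact Or.inl h
        · exact Or.inr (Or.inl h)
      · obtain ⟨u, hu, hup⟩ := mem_preSet.1 hp
        rcases (hUM' u hu p hup).1 with h | h
        · exact Or.inl h
        · exact Or.inr (Or.inl h)
    · rintro t (ht | ht) u (hu | hu) p hpt hpu
      · exact h3 t ht u hu p hpt hpu
      · exact absurd (mem_preSet.2 ⟨t, ht, hpt⟩) (hUM' u hu p hpu).2
      · exact absurd (mem_preSet.2 ⟨u, hu, hpu⟩) (hUM' t ht p hpt).2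
      · by_contra hne
        have hp : p ∈ N.pre t ∩ N.pre u := ⟨hpt, hpu⟩
        rw [hUd t ht u hu hne] at hp
        exact hp
    · rintro t (ht | ht) u (hu | hu) p hpt hpu
      · exact h4 t ht u hu p hpt hpu
      · exact absurd hpu (hpair t ht u hu p hpt)
      · exact absurd hpt (hpair u hu t ht p hpu)
      · by_contra hne
        have hp : p ∈ N.post t ∩ N.post u := ⟨hpt, hpu⟩
        rw [hwfs.1 U (by simp) t ht u hu hne] at hp
        exact hp

theorem init_nonempty {N : Net α} (h : N.IsAcyclicNet) (hwf : N.WellFormedNet) :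
    N.initMarking.Nonempty := by
  obtain ⟨-, -, -, hflow, hne, -, hT⟩ := h
  rcases N.transitions.eq_empty_or_nonempty with he | ⟨t, ht⟩
  · obtain ⟨p, hp⟩ := hne
    refine ⟨p, hp, ?_⟩
    ext x
    simp only [pre, Set.mem_ofPred_eq, Set.mem_empty_iff_false, iff_false]
    intro hx
    have := hflow x p hx
    simp only [he, Set.mem_empty_iff_false, and_false, false_and, or_self] at this
  · obtain ⟨σ, ⟨M, hs⟩, ⟨V, hV, _⟩⟩ := hwf.1 t ht
    cases hs with
    | nil => cases hV
    | cons h1 _ =>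
      obtain ⟨⟨⟨⟨u, hu⟩, hUT, _⟩, hUM⟩, _⟩ := h1
      obtain ⟨p, hp⟩ := (hT u (hUT hu)).1
      exact ⟨p, hUM (mem_preSet.2 ⟨u, hu, hp⟩)⟩

theorem induced_scenario {N : Net α} (h : N.IsAcyclicNet) (hwf : N.WellFormedNet)
    {σ : List (Set α)} {M : Set α} (hs : StepSeqFrom N N.initMarking σ M) :
    N.inducedScenario σ ∈ N.scenarios := by
  obtain ⟨-, h2, h3, h4⟩ := seq_invariant hwf hs
  have hT := seq_trans hs
  have hne := init_nonempty h hwf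
  obtain ⟨hPf, hTf, hd, hflow, -, hac, hTne⟩ := h
  have hPsub : N.initMarking ∪ N.postSet (transOf σ) ⊆ N.places := by
    rintro p (hp | hp)
    · exact hp.1
    · obtain ⟨t, ht, htp⟩ := mem_postSet.1 hp
      rcases hflow t p htp with h | h
      · exact absurd (hT ht) (Set.disjoint_left.1 hd h.1)
      · exact h.2
  have hpp : ∀ t ∈ transOf σ, (N.inducedScenario σ).pre t = N.pre t ∧
      (N.inducedScenario σ).post t = N.post t := by
    intro t ht
    constructor
    · ext p
      constructor
      · exact fun hp => hp.1
      · exact fun hp => ⟨hp, Or.inl ⟨h2 (mem_preSet.2 ⟨t, ht, hp⟩), ht⟩⟩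
    · ext p
      constructor
      · exact fun hp => hp.1
      · exact fun hp => ⟨hp, Or.inr ⟨ht, Or.inr (mem_postSet.2 ⟨t, ht, hp⟩)⟩⟩
  have hnot : ∀ p ∈ N.initMarking ∪ N.postSet (transOf σ), p ∉ transOf σ :=
    fun p hp hp' => Set.disjoint_left.1 hd (hPsub hp) (hT hp')
  refine ⟨⟨⟨hPf.subset hPsub, hTf.subset hT, hd.mono hPsub hT, fun x y hxy => hxy.2,
    hne.mono Set.subset_union_left, fun x hx => hac x (Relation.TransGen.mono (fun _ _ h => h.1) _ _ hx), ?_⟩, ?_⟩,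
    ⟨hne.mono Set.subset_union_left, hPsub, hT, fun x y => Iff.rfl, hpp⟩, ?_⟩
  · intro t ht
    rw [(hpp t ht).1, (hpp t ht).2]
    exact hTne t (hT ht)
  · intro p hp
    constructor
    · intro t ht u hu
      have ht' : t ∈ transOf σ := by
        rcases ht.2 with h | h
        · exact absurd h.2 (hnot p hp)
        · exact h.1
      have hu' : u ∈ transOf σ := by
        rcases hu.2 with h | h
        · exact absurd h.2 (hnot p hp)
        · exact h.1
      exact h4 t ht' u hu' p ht.1 hu.1
    · intro t ht u hu
      have ht' : t ∈ transOf σ := by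
        rcases ht.2 with h | h
        · exact h.2
        · exact absurd h.1 (hnot p hp)
      have hu' : u ∈ transOf σ := by
        rcases hu.2 with h | h
        · exact h.2
        · exact absurd h.1 (hnot p hp)
      exact h3 t ht' u hu' p ht.1 hu.1
  · ext p
    constructor
    · rintro ⟨hp | hp, he⟩
      · exact hp
      · obtain ⟨t, ht, htp⟩ := mem_postSet.1 hp
        have : t ∈ (N.inducedScenario σ).pre p := ⟨htp, Or.inr ⟨ht, Or.inr hp⟩⟩
        rw [he] at this
        exact this.elim
    · intro hp
      refine ⟨Or.inl hp, ?_⟩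
      ext x
      simp only [Set.mem_empty_iff_false, iff_false]
      intro hx
      have : x ∈ N.pre p := hx.1
      rw [hp.2] at this
      exact this

theorem acyclic_minimal {N : Net α} (h : N.IsAcyclicNet) {X : Set α}
    (hX : X ⊆ N.transitions) (hne : X.Nonempty) :
    ∃ t ∈ X, ∀ u p, N.flow u p → N.flow p t → u ∉ X := by
  have hfin : X.Finite := h.2.1.subset hX
  have hac := h.2.2.2.2.2.1
  have : IsStrictOrder α (Relation.TransGen N.flow) :=
    { irrefl := hac, trans := fun _ _ _ => Relation.TransGen.trans }
  have wf : X.WellFoundedOn (Relation.TransGen N.flow) := hfin.wellFoundedOn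
  have : Nonempty X := hne.to_subtype
  obtain ⟨m, -, hm⟩ := WellFounded.has_min wf (Set.univ : Set X) Set.univ_nonempty
  refine ⟨m.1, m.2, fun u p hup hpm hu => ?_⟩
  exact hm ⟨u, hu⟩ trivial (Relation.TransGen.tail (Relation.TransGen.single hup) hpm)

theorem scenario_place {S N : Net α} (hS : S ∈ N.scenarios) {p : α} (hp : p ∈ S.places) :
    p ∈ N.initMarking ∪ N.postSet S.transitions := by
  obtain ⟨⟨hac, -⟩, hsub, hi⟩ := hS
  by_cases he : S.pre p = ∅
  · left
    change p ∈ N.initPlaces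
    rw [← hi]
    exact ⟨hp, he⟩
  · right
    obtain ⟨t, ht⟩ := Set.nonempty_iff_ne_empty.2 he
    rcases hac.2.2.2.1 t p ht with h | h
    · exact absurd h.2 (Set.disjoint_left.1 hac.2.2.1 hp)
    · exact mem_postSet.2 ⟨t, h.1, ((hsub.2.2.2.1 t p).1 ht).1⟩

/-- An incomplete execution inside a scenario can be continued. -/
theorem scenario_continue {S N : Net α} (hwf : N.WellFormedNet) (hS : S ∈ N.scenarios)
    {σ : List (Set α)} {M : Set α} (hs : StepSeqFrom N N.initMarking σ M)
    (hsub : transOf σ ⊆ S.transitions) (hne : transOf σ ≠ S.transitions) :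
    ∃ t ∈ S.transitions, t ∉ transOf σ ∧ σ ++ [{t}] ∈ N.sseq := by
  have hne' : (S.transitions \ transOf σ).Nonempty :=
    Set.nonempty_of_ssubset (hsub.ssubset_of_ne hne)
  obtain ⟨t, ⟨htS, htσ⟩, hmin⟩ := acyclic_minimal hS.1.1 Set.sdiff_subset hne'
  refine ⟨t, htS, htσ, _, stepSeq_snoc.2 ⟨M, hs, ⟨⟨Set.singleton_nonempty t, ?_, ?_⟩, ?_⟩, rfl⟩⟩
  · rintro _ rfl
    exact hS.2.1.2.2.1 htS
  · rintro a rfl b rfl hab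
    exact absurd rfl hab
  · intro p hp
    obtain ⟨t', rfl, hpt⟩ := mem_preSet.1 hp
    have hpt' : p ∈ S.pre t' := by
      rw [(hS.2.1.2.2.2.2 t' htS).1]; exact hpt
    have hpS : p ∈ S.places := by
      rcases hS.1.1.2.2.2.1 p t' hpt' with h | h
      · exact h.1
      · exact absurd htS (Set.disjoint_left.1 hS.1.1.2.2.1 h.2)
    rw [(seq_invariant hwf hs).1]
    constructor
    · rcases scenario_place hS hpS with h | h
      · exact Or.inl h
      · right
        obtain ⟨u, hu, hup⟩ := mem_postSet.1 h
        have hup' : p ∈ S.post u := by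
          rw [(hS.2.1.2.2.2.2 u hu).2]; exact hup
        have := hmin u p hup' hpt'
        have huσ : u ∈ transOf σ := by
          by_contra hc
          exact this ⟨hu, hc⟩
        exact mem_postSet.2 ⟨u, huσ, hup⟩
    · intro hc
      obtain ⟨u, hu, hpu⟩ := mem_preSet.1 hc
      have hpu' : p ∈ S.pre u := by
        rw [(hS.2.1.2.2.2.2 u (hsub hu)).1]; exact hpu
      have : t' = u := (hS.1.2 p hpS).2 hpt' hpu'
      exact htσ (this ▸ hu)

theorem net_ext {A B : Net α} (h1 : A.places = B.places) (h2 : A.transitions = B.transitions)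
    (h3 : ∀ x y, A.flow x y ↔ B.flow x y) : A = B := by
  cases A; cases B
  simp only at h1 h2 h3
  subst h1 h2
  congr
  funext x y
  exact propext (h3 x y)

theorem scenario_sub {S S' N : Net α} (hS : S ∈ N.scenarios) (hS' : S' ∈ N.scenarios)
    (hT : S.transitions ⊆ S'.transitions) : CoInitial S S' := by
  have hP : S.places ⊆ S'.places := by
    intro p hp
    rcases scenario_place hS hp with h | h
    · have : p ∈ S'.initPlaces := by rw [hS'.2.2]; exact h
      exact this.1
    · obtain ⟨t, ht, htp⟩ := mem_postSet.1 h
      have htp' : p ∈ S'.post t := by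
        rw [(hS'.2.1.2.2.2.2 t (hT ht)).2]; exact htp
      rcases hS'.1.1.2.2.2.1 t p htp' with h | h
      · exact absurd (hT ht) (Set.disjoint_left.1 hS'.1.1.2.2.1 h.1)
      · exact h.2
  refine ⟨⟨hS.2.1.1, hP, hT, ?_, ?_⟩, hS.2.2.trans hS'.2.2.symm⟩
  · intro x y
    rw [hS.2.1.2.2.2.1, hS'.2.1.2.2.2.1]
    constructor
    · rintro ⟨h1, h2⟩
      refine ⟨⟨h1, ?_⟩, h2⟩
      rcases h2 with h2 | h2
      · exact Or.inl ⟨hP h2.1, hT h2.2⟩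
      · exact Or.inr ⟨hT h2.1, hP h2.2⟩
    · rintro ⟨⟨h1, -⟩, h2⟩
      exact ⟨h1, h2⟩
  · intro t ht
    rw [(hS.2.1.2.2.2.2 t ht).1, (hS.2.1.2.2.2.2 t ht).2, (hS'.2.1.2.2.2.2 t (hT ht)).1,
      (hS'.2.1.2.2.2.2 t (hT ht)).2]
    exact ⟨rfl, rfl⟩

theorem scenario_eq {S S' N : Net α} (hS : S ∈ N.scenarios) (hS' : S' ∈ N.scenarios)
    (hT : S.transitions = S'.transitions) : S = S' := by
  have h1 := (scenario_sub hS hS' hT.le).1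
  have h2 := (scenario_sub hS' hS hT.ge).1
  refine net_ext (h1.2.1.antisymm h2.2.1) hT fun x y => ⟨fun h => ?_, fun h => ?_⟩
  · exact ((h1.2.2.2.1 x y).1 h).1
  · exact ((h2.2.2.2.1 x y).1 h).1

theorem scenario_init {S N : Net α} (hS : S ∈ N.scenarios) : S.initMarking = N.initMarking :=
  hS.2.2

theorem scenario_sseq {S N : Net α} (hS : S ∈ N.scenarios) {σ : List (Set α)}
    (h : σ ∈ S.sseq) : σ ∈ N.sseq := by
  obtain ⟨M, hM⟩ := h
  rw [scenario_init hS] at hM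
  exact ⟨M, subnet_seq_up hS.2.1 hM⟩

theorem scenario_sseq_down {S N : Net α} (hS : S ∈ N.scenarios) {σ : List (Set α)}
    (h : σ ∈ N.sseq) (hσ : transOf σ ⊆ S.transitions) : σ ∈ S.sseq := by
  obtain ⟨M, hM⟩ := h
  refine ⟨M, ?_⟩
  rw [scenario_init hS]
  exact subnet_seq_down hS.2.1 hM hσ

theorem max_down {N : Net α} (h : N.IsAcyclicNet) (hwf : N.WellFormedNet) {σ : List (Set α)}
    (hσ : σ ∈ N.maxsseq) :
    ∃ S ∈ N.maxscenarios, σ ∈ S.maxsseq ∧ transOf σ ⊆ S.transitions := by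
  obtain ⟨⟨M, hM⟩, hmax⟩ := hσ
  have hS := induced_scenario h hwf hM
  refine ⟨N.inducedScenario σ, ⟨hS, ?_⟩, ⟨scenario_sseq_down hS ⟨M, hM⟩ le_rfl, ?_⟩, le_rfl⟩
  · rintro ⟨S', hS', hne, hco⟩
    have hsub : transOf σ ⊆ S'.transitions := hco.1.2.2.1
    by_cases he : transOf σ = S'.transitions
    · exact hne (scenario_eq hS' hS he.symm)
    · obtain ⟨t, -, -, ht⟩ := scenario_continue hwf hS' hM hsub he
      exact hmax ⟨_, ht⟩
  · rintro ⟨U, hU⟩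
    exact hmax ⟨U, scenario_sseq hS hU⟩

theorem max_up {S N : Net α} (h : N.IsAcyclicNet) (hwf : N.WellFormedNet) {σ : List (Set α)}
    (hS : S ∈ N.maxscenarios) (hσ : σ ∈ S.maxsseq) : σ ∈ N.maxsseq := by
  obtain ⟨hS, hSmax⟩ := hS
  obtain ⟨⟨M, hM⟩, hmax⟩ := hσ
  have hsub := seq_trans hM
  rw [scenario_init hS] at hM
  have hMN := subnet_seq_up hS.2.1 hM
  have heq : transOf σ = S.transitions := by
    by_contra hne
    obtain ⟨t, htS, -, ht⟩ := scenario_continue hwf hS hMN hsub hne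
    refine hmax ⟨_, scenario_sseq_down hS ht ?_⟩
    rw [transOf_snoc]
    exact Set.union_subset hsub (Set.singleton_subset_iff.2 htS)
  refine ⟨⟨M, hMN⟩, ?_⟩
  rintro ⟨U, M', hU⟩
  have hS' := induced_scenario h hwf hU
  refine hSmax ⟨_, hS', ?_, scenario_sub hS hS' ?_⟩
  · intro he
    have h1 : transOf (σ ++ [U]) = S.transitions := congrArg Net.transitions he
    rw [transOf_snoc, ← heq] at h1
    obtain ⟨M₁, _, hst⟩ := stepSeq_snoc.1 hU
    obtain ⟨u, hu⟩ := hst.1.1.1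
    obtain ⟨p, hp⟩ := (h.2.2.2.2.2.2 u (hst.1.1.2.1 hu)).2
    have huσ : u ∈ transOf σ := h1 ▸ Or.inr hu
    obtain ⟨V, hV, huV⟩ := huσ
    have := (List.pairwise_append.1 (hwf.2 _ ⟨M', hU⟩).2).2.2 V hV U (by simp)
    have hpp : p ∈ N.postSet V ∩ N.postSet U :=
      ⟨mem_postSet.2 ⟨u, huV, hp⟩, mem_postSet.2 ⟨u, hu, hp⟩⟩
    rw [this] at hpp
    exact hpp
  · change S.transitions ⊆ transOf (σ ++ [U])
    rw [transOf_snoc, heq]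
    exact Set.subset_union_left

end Net

/-- For a well-formed acyclic net:
(1) `f(AN) = ⋃ f(scenarios(AN))` for `f = sseq, mixsseq, reach, fseq`; and
(2) `f(AN) = ⋃ f(maxscenarios(AN))` for `f = maxsseq, maxmixsseq, finreach`. -/
theorem stmt17 {α : Type*} (N : Net α) (h : N.IsAcyclicNet) (hwf : N.WellFormedNet) :
    (N.sseq = ⋃ S ∈ N.scenarios, Net.sseq S) ∧
    (N.mixsseq = ⋃ S ∈ N.scenarios, Net.mixsseq S) ∧
    (N.reach = ⋃ S ∈ N.scenarios, Net.reach S) ∧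
    (N.fseq = ⋃ S ∈ N.scenarios, Net.fseq S) ∧
    (N.maxsseq = ⋃ S ∈ N.maxscenarios, Net.maxsseq S) ∧
    (N.maxmixsseq = ⋃ S ∈ N.maxscenarios, Net.maxmixsseq S) ∧
    (N.finreach = ⋃ S ∈ N.maxscenarios, Net.finreach S) := by
  refine ⟨?_, ?_, ?_, ?_, ?_, ?_, ?_⟩
  · ext σ
    simp only [Set.mem_iUnion, exists_prop]
    constructor
    · rintro ⟨M, hM⟩
      have hS := Net.induced_scenario h hwf hM
      exact ⟨_, hS, Net.scenario_sseq_down hS ⟨M, hM⟩ le_rfl⟩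
    · rintro ⟨S, hS, hσ⟩
      exact Net.scenario_sseq hS hσ
  · ext ⟨M, l⟩
    simp only [Set.mem_iUnion, exists_prop]
    constructor
    · rintro ⟨h1, h2⟩
      dsimp only at h1 h2
      subst h1
      obtain ⟨M', hM'⟩ := Net.mix_stepSeq h2
      have hS := Net.induced_scenario h hwf hM'
      exact ⟨_, hS, (Net.scenario_init hS).symm, Net.subnet_mix_down hS.2.1 h2 le_rfl⟩
    · rintro ⟨S, hS, h1, h2⟩
      exact ⟨h1.trans (Net.scenario_init hS), Net.subnet_mix_up hS.2.1 h2⟩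
  · ext M
    simp only [Set.mem_iUnion, exists_prop]
    constructor
    · rintro ⟨σ, hM⟩
      have hS := Net.induced_scenario h hwf hM
      refine ⟨_, hS, σ, ?_⟩
      rw [Net.scenario_init hS]
      exact Net.subnet_seq_down hS.2.1 hM le_rfl
    · rintro ⟨S, hS, σ, hσ⟩
      rw [Net.scenario_init hS] at hσ
      exact ⟨σ, Net.subnet_seq_up hS.2.1 hσ⟩
  · ext σ
    simp only [Set.mem_iUnion, exists_prop]
    constructor
    · rintro ⟨⟨M, hM⟩, hf⟩
      have hS := Net.induced_scenario h hwf hM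
      exact ⟨_, hS, Net.scenario_sseq_down hS ⟨M, hM⟩ le_rfl, hf⟩
    · rintro ⟨S, hS, hσ, hf⟩
      exact ⟨Net.scenario_sseq hS hσ, hf⟩
  · ext σ
    simp only [Set.mem_iUnion, exists_prop]
    constructor
    · intro hσ
      obtain ⟨S, hS, hmax, -⟩ := Net.max_down h hwf hσ
      exact ⟨S, hS, hmax⟩
    · rintro ⟨S, hS, hσ⟩
      exact Net.max_up h hwf hS hσ
  · ext p
    simp only [Set.mem_iUnion, exists_prop, Net.maxmix_iff]
    constructor
    · rintro ⟨⟨h1, h2⟩, h3⟩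
      obtain ⟨S, hS, hmax, hsub⟩ := Net.max_down h hwf h3
      exact ⟨S, hS, ⟨h1.trans (Net.scenario_init hS.1).symm,
        Net.subnet_mix_down hS.1.2.1 h2 hsub⟩, hmax⟩
    · rintro ⟨S, hS, ⟨h1, h2⟩, h3⟩
      exact ⟨⟨h1.trans (Net.scenario_init hS.1), Net.subnet_mix_up hS.1.2.1 h2⟩,
        Net.max_up h hwf hS h3⟩
  · ext M
    simp only [Set.mem_iUnion, exists_prop]
    constructor
    · rintro ⟨σ, hσ, hM⟩
      obtain ⟨S, hS, hmax, hsub⟩ := Net.max_down h hwf hσ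
      refine ⟨S, hS, σ, hmax, ?_⟩
      rw [Net.scenario_init hS.1]
      exact Net.subnet_seq_down hS.1.2.1 hM hsub
    · rintro ⟨S, hS, σ, hσ, hM⟩
      rw [Net.scenario_init hS.1] at hM
      exact ⟨σ, Net.max_up h hwf hS hσ, Net.subnet_seq_up hS.1.2.1 hM⟩
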